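/- Let n ≥ 1, let x ∈ (0,1), let a > 1, and let ρ₁, ρ₂ be density matrices (n×n complex positive semidefinite matrices of trace 1) such that ρ_Av := x·ρ₁ + (1−x)·ρ₂ is positive definite. Then h(x) ≥ x·H̃_a(ρ₁, ρ_Av) + (1−x)·H̃_a(ρ₂, ρ_Av) ≥ S(ρ_Av) − x·S(ρ₁) − (1−x)·S(ρ₂), where h(x) = −x·log x − (1−x)·log(1−x) is the binary entropy. -/

import Mathlib

open Matrix ComplexOrder

/-- Apply a real function to a Hermitian matrix via the spectral decomposition
`A = U D U*`: the result is `U (f(D)) U*` where `f` acts on the diagonal. -/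
noncomputable def mfun {m : Type*} [Fintype m] [DecidableEq m]
    (f : ℝ → ℝ) (A : Matrix m m ℂ) : Matrix m m ℂ :=
  if hA : A.IsHermitian then hA.cfc f else 0

/-- Matrix logarithm via spectral decomposition, with the convention `log 0 = 0`
(note `Real.log 0 = 0`). -/
noncomputable def matLog {m : Type*} [Fintype m] [DecidableEq m]
    (A : Matrix m m ℂ) : Matrix m m ℂ :=
  mfun Real.log A

/-- The positive semidefinite square root of a positive semidefinite matrix,
via spectral decomposition. -/
noncomputable def matSqrt {m : Type*} [Fintype m] [DecidableEq m]
    (A : Matrix m m ℂ) : Matrix m m ℂ :=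
  mfun Real.sqrt A

/-- Real power of a (positive semidefinite / positive definite) matrix via spectral
decomposition. -/
noncomputable def matRpow {m : Type*} [Fintype m] [DecidableEq m]
    (t : ℝ) (A : Matrix m m ℂ) : Matrix m m ℂ :=
  mfun (fun u => u ^ t) A

/-- The von Neumann entropy `S(ρ) = -Tr(ρ log ρ)`. -/
noncomputable def vnEntropy {m : Type*} [Fintype m] [DecidableEq m]
    (ρ : Matrix m m ℂ) : ℝ :=
  -(Matrix.trace (ρ * matLog ρ)).re

/-- The quantum relative entropy `H(ρ, γ) = Tr(ρ (log ρ - log γ))`. -/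
noncomputable def relEntropy {m : Type*} [Fintype m] [DecidableEq m]
    (ρ γ : Matrix m m ℂ) : ℝ :=
  (Matrix.trace (ρ * (matLog ρ - matLog γ))).re

/-- The trace norm of a Hermitian matrix: the sum of the absolute values of its
eigenvalues. -/
noncomputable def traceNorm {m : Type*} [Fintype m] [DecidableEq m]
    (A : Matrix m m ℂ) : ℝ :=
  if hA : A.IsHermitian then ∑ i, |hA.eigenvalues i| else 0

/-- A density matrix: positive semidefinite with trace 1. -/
def IsDensity {m : Type*} [Fintype m] [DecidableEq m] (ρ : Matrix m m ℂ) : Prop :=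
  ρ.PosSemidef ∧ Matrix.trace ρ = 1

/-- The binary entropy `h(x) = -x log x - (1-x) log (1-x)`. -/
noncomputable def binEntropy (x : ℝ) : ℝ :=
  -(x * Real.log x) - (1 - x) * Real.log (1 - x)

/-- The Renyi relative entropy `H_a(ρ,γ) = (a-1)⁻¹ log Tr(ρ^a γ^(1-a))`. -/
noncomputable def renyiRel {m : Type*} [Fintype m] [DecidableEq m]
    (a : ℝ) (ρ γ : Matrix m m ℂ) : ℝ :=
  (a - 1)⁻¹ * Real.log (Matrix.trace (matRpow a ρ * matRpow (1 - a) γ)).re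

/-- The sandwiched Renyi relative entropy
`H̃_a(ρ,γ) = (a-1)⁻¹ log Tr((γ^((1-a)/(2a)) ρ γ^((1-a)/(2a)))^a)`. -/
noncomputable def sandRenyiRel {m : Type*} [Fintype m] [DecidableEq m]
    (a : ℝ) (ρ γ : Matrix m m ℂ) : ℝ :=
  (a - 1)⁻¹ * Real.log
    (Matrix.trace (matRpow a
      (matRpow ((1 - a) / (2 * a)) γ * ρ * matRpow ((1 - a) / (2 * a)) γ))).re

/-!
Write `γ` for the average state. The sandwiched divergence lies between the relative entropy and,
as `p i • ρ i ≤ γ`, the constant `-log (p i)`; averaging both bounds with the weights `p i` gives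
the Holevo quantity on the left and the Shannon entropy on the right.

Both bounds concern `Q = Tr (γ^s ρ γ^s)^a`, `s = (1-a)/(2a)`, and because `T* T` and `T T*` have the
same spectrum, `Q = Tr B^a` with `B = √ρ γ^(1/a-1) √ρ`.

* Lower bound: in the eigenbasis `u` of `ρ`, `⟨uᵢ, B uᵢ⟩ = λᵢ ⟨uᵢ, γ^(1/a-1) uᵢ⟩`, which is at least
  `λᵢ exp ((1/a-1) ⟨uᵢ, log γ uᵢ⟩)` by Jensen. Peierls' inequality for `t ↦ t^a`, followed by Jensen
  for `exp` with weights `λᵢ`, gives `Q ≥ exp ((a-1) H(ρ, γ))`.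
* Upper bound: by homogeneity, suppose `ρ ≤ γ`, i.e. `√ρ γ⁻¹ √ρ ≤ 1`, and put `v = √ρ w` for a unit
  eigenvector `w` of `B`. Hölder interpolates the exponent `1/a-1` between `-1` and `0`, so the
  eigenvalue `⟨v, γ^(1/a-1) v⟩` is at most `‖v‖^(2/a)`; summing `a`-th powers gives `Q ≤ Tr ρ`.
-/

section FunctionalCalculus

variable {m : Type*} [Fintype m] [DecidableEq m] {A γ : Matrix m m ℂ} (f g : ℝ → ℝ)

lemma mfun_eq_cfc (A : Matrix m m ℂ) : mfun f A = cfc f A := by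
  by_cases hA : A.IsHermitian
  · rw [mfun, dif_pos hA, hA.cfc_eq]
  · rw [mfun, dif_neg hA, cfc_apply_of_not_predicate A (mt IsSelfAdjoint.isHermitian hA)]

lemma isHermitian_mfun (A : Matrix m m ℂ) : (mfun f A).IsHermitian :=
  mfun_eq_cfc f A ▸ cfc_predicate f A

lemma conjTranspose_matSqrt (A : Matrix m m ℂ) : (matSqrt A)ᴴ = matSqrt A :=
  isHermitian_mfun _ A

lemma conjTranspose_matRpow (t : ℝ) (A : Matrix m m ℂ) : (matRpow t A)ᴴ = matRpow t A :=
  isHermitian_mfun _ A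

lemma mfun_id (hA : A.IsHermitian) : mfun id A = A := by
  rw [mfun_eq_cfc, cfc_id ℝ A hA.isSelfAdjoint]

lemma mfun_one (hA : A.IsHermitian) : mfun (fun _ => 1) A = 1 := by
  rw [mfun_eq_cfc, cfc_const_one ℝ A hA.isSelfAdjoint]

lemma mfun_mul_mfun (A : Matrix m m ℂ) :
    mfun f A * mfun g A = mfun (fun u => f u * g u) A := by
  simp only [mfun_eq_cfc]
  exact (cfc_mul f g A (finite_real_spectrum.continuousOn f)
    (finite_real_spectrum.continuousOn g)).symm

variable {f g} in
lemma mfun_congr (hA : A.IsHermitian)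
    (hfg : ∀ i, f (hA.eigenvalues i) = g (hA.eigenvalues i)) : mfun f A = mfun g A := by
  rw [mfun_eq_cfc, mfun_eq_cfc]
  refine cfc_congr ?_
  rw [hA.spectrum_real_eq_range_eigenvalues]
  rintro _ ⟨i, rfl⟩
  exact hfg i

lemma mfun_smul (hA : A.IsHermitian) (c : ℝ) : mfun f (c • A) = mfun (fun u => f (c * u)) A := by
  rw [mfun_eq_cfc, mfun_eq_cfc]
  exact (cfc_comp_smul c f A (finite_real_spectrum.image _ |>.continuousOn f) hA.isSelfAdjoint).symm

lemma matSqrt_mul_self (hA : A.PosSemidef) : matSqrt A * matSqrt A = A := by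
  conv_rhs => rw [← mfun_id hA.isHermitian]
  rw [matSqrt, mfun_mul_mfun]
  exact mfun_congr hA.isHermitian fun i => Real.mul_self_sqrt (hA.eigenvalues_nonneg i)

lemma matRpow_mul_matRpow (hγ : γ.PosDef) (s t : ℝ) :
    matRpow s γ * matRpow t γ = matRpow (s + t) γ := by
  rw [matRpow, matRpow, mfun_mul_mfun]
  exact mfun_congr hγ.isHermitian fun i => (Real.rpow_add (hγ.eigenvalues_pos i) s t).symm

lemma matRpow_zero (hA : A.IsHermitian) : matRpow 0 A = 1 := by
  simpa only [matRpow, Real.rpow_zero] using mfun_one hA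

lemma matRpow_one (hA : A.IsHermitian) : matRpow 1 A = A := by
  simpa only [matRpow, Real.rpow_one] using! mfun_id hA

lemma matRpow_neg_one (hγ : γ.PosDef) : matRpow (-1) γ = γ⁻¹ := by
  refine (inv_eq_left_inv ?_).symm
  nth_rw 2 [← matRpow_one hγ.isHermitian]
  rw [matRpow_mul_matRpow hγ, neg_add_cancel, matRpow_zero hγ.isHermitian]

lemma posSemidef_matRpow (hγ : γ.PosDef) (t : ℝ) : (matRpow t γ).PosSemidef := by
  have h := posSemidef_conjTranspose_mul_self (matRpow (t / 2) γ)
  rwa [conjTranspose_matRpow, matRpow_mul_matRpow hγ, add_halves] at h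

lemma matRpow_smul (hA : A.PosSemidef) {c : ℝ} (hc : 0 ≤ c) (t : ℝ) :
    matRpow t (c • A) = c ^ t • matRpow t A := by
  rw [matRpow, mfun_smul _ hA.isHermitian, matRpow, mfun_eq_cfc, mfun_eq_cfc,
    ← cfc_smul _ _ _ (finite_real_spectrum.continuousOn _), ← mfun_eq_cfc, ← mfun_eq_cfc]
  exact mfun_congr hA.isHermitian fun i => Real.mul_rpow hc (hA.eigenvalues_nonneg i)

end FunctionalCalculus

section QuadForm

variable {m n : Type*} [Fintype m] [Fintype n]

/-- The real part `Re ⟨v, A v⟩` of the quadratic form of `A`: for Hermitian `A` and a unit vector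
`v`, the expectation of the observable `A` in the pure state `v`. The squared norm of `v` is
`quadForm 1 v`. -/
noncomputable def quadForm (A : Matrix m m ℂ) (v : m → ℂ) : ℝ :=
  (star v ⬝ᵥ A *ᵥ v).re

lemma quadForm_conjTranspose_mul_mul_same (A : Matrix m m ℂ) (T : Matrix m n ℂ) (v : n → ℂ) :
    quadForm (Tᴴ * A * T) v = quadForm A (T *ᵥ v) := by
  rw [quadForm, quadForm, ← mulVec_mulVec, ← mulVec_mulVec, dotProduct_mulVec, star_mulVec]

lemma quadForm_sub (A B : Matrix m m ℂ) (v : m → ℂ) :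
    quadForm (A - B) v = quadForm A v - quadForm B v := by
  rw [quadForm, sub_mulVec, dotProduct_sub, Complex.sub_re, quadForm, quadForm]

lemma quadForm_smul_vec (A : Matrix m m ℂ) (c : ℝ) (v : m → ℂ) :
    quadForm A (c • v) = c ^ 2 * quadForm A v := by
  simp [quadForm, mulVec_smul, pow_two, mul_assoc]

lemma quadForm_mul_of_mulVec_eq_smul (A : Matrix m m ℂ) {B : Matrix m m ℂ} {c : ℝ} {v : m → ℂ}
    (hv : B *ᵥ v = c • v) : quadForm (A * B) v = c * quadForm A v := by
  rw [quadForm, ← mulVec_mulVec, hv, mulVec_smul, dotProduct_smul, Complex.smul_re, smul_eq_mul,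
    quadForm]

lemma quadForm_nonneg {A : Matrix m m ℂ} (hA : A.PosSemidef) (v : m → ℂ) : 0 ≤ quadForm A v :=
  (Complex.nonneg_iff.mp (hA.dotProduct_mulVec_nonneg v)).1

lemma re_trace_eq_sum_quadForm {ι : Type*} [Fintype ι]
    (b : OrthonormalBasis ι ℂ (EuclideanSpace ℂ m)) (A : Matrix m m ℂ) :
    (trace A).re = ∑ i, quadForm A (b i).ofLp := by
  classical
  have h := (Matrix.toEuclideanLin A).trace_eq_sum_inner b
  rw [toEuclideanLin_eq_toLin_orthonormal, trace_toLin_eq] at h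
  rw [h, Complex.re_sum]
  refine Finset.sum_congr rfl fun i _ => ?_
  rw [← toEuclideanLin_eq_toLin_orthonormal, EuclideanSpace.inner_eq_star_dotProduct,
    dotProduct_comm]
  rfl

variable [DecidableEq m]

lemma quadForm_diagonal (d : m → ℝ) (v : m → ℂ) :
    quadForm (diagonal fun i => (d i : ℂ)) v = ∑ i, ‖v i‖ ^ 2 * d i := by
  simp only [quadForm, dotProduct, mulVec_diagonal, Complex.re_sum, Pi.star_apply, RCLike.star_def]
  refine Finset.sum_congr rfl fun i _ => ?_
  rw [mul_left_comm, Complex.conj_mul', Complex.re_ofReal_mul, ← Complex.ofReal_pow,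
    Complex.ofReal_re, mul_comm]

lemma quadForm_one_orthonormalBasis {ι : Type*} [Fintype ι]
    (b : OrthonormalBasis ι ℂ (EuclideanSpace ℂ m)) (i : ι) : quadForm 1 (b i).ofLp = 1 := by
  rw [quadForm, one_mulVec, dotProduct_comm, ← EuclideanSpace.inner_eq_star_dotProduct,
    b.inner_eq_one, Complex.one_re]

end QuadForm

section SpectralWeight

variable {m : Type*} [Fintype m] [DecidableEq m] {A γ : Matrix m m ℂ}

/-- The spectral measure of the Hermitian matrix `A` in the state `v`: the weight `|⟨uⱼ, v⟩|²` of
`v` on the `j`-th vector of the eigenbasis `u` of `A`. -/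
noncomputable def spectralWeight (hA : A.IsHermitian) (v : m → ℂ) (j : m) : ℝ :=
  ‖((hA.eigenvectorUnitary : Matrix m m ℂ)ᴴ *ᵥ v) j‖ ^ 2

lemma spectralWeight_nonneg (hA : A.IsHermitian) (v : m → ℂ) (j : m) :
    0 ≤ spectralWeight hA v j :=
  sq_nonneg _

lemma quadForm_mfun (hA : A.IsHermitian) (f : ℝ → ℝ) (v : m → ℂ) :
    quadForm (mfun f A) v = ∑ j, spectralWeight hA v j * f (hA.eigenvalues j) := by
  have h := quadForm_conjTranspose_mul_mul_same (diagonal fun j => (f (hA.eigenvalues j) : ℂ))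
    (hA.eigenvectorUnitary : Matrix m m ℂ)ᴴ v
  rw [conjTranspose_conjTranspose, quadForm_diagonal] at h
  rw [mfun, dif_pos hA]
  exact h

lemma sum_spectralWeight (hA : A.IsHermitian) (v : m → ℂ) :
    ∑ j, spectralWeight hA v j = quadForm 1 v := by
  simpa only [mfun_one hA, mul_one] using (quadForm_mfun hA (fun _ => 1) v).symm

lemma map_quadForm_mfun_le {s : Set ℝ} {f : ℝ → ℝ} (hf : ConvexOn ℝ s f) (hA : A.IsHermitian)
    {g : ℝ → ℝ} (hg : ∀ j, g (hA.eigenvalues j) ∈ s) {v : m → ℂ} (hv : quadForm 1 v = 1) :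
    f (quadForm (mfun g A) v) ≤ quadForm (mfun (f ∘ g) A) v := by
  rw [quadForm_mfun hA, quadForm_mfun hA]
  exact hf.map_sum_le (fun j _ => spectralWeight_nonneg hA v j)
    ((sum_spectralWeight hA v).trans hv) fun j _ => hg j

lemma exp_quadForm_matLog_le (hγ : γ.PosDef) (t : ℝ) {v : m → ℂ} (hv : quadForm 1 v = 1) :
    Real.exp (t * quadForm (matLog γ) v) ≤ quadForm (matRpow t γ) v := by
  have hconv : ConvexOn ℝ Set.univ fun y => Real.exp (t * y) :=
    convexOn_exp.comp_linearMap (LinearMap.mulLeft ℝ t)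
  refine (map_quadForm_mfun_le hconv hγ.isHermitian (fun _ => Set.mem_univ _) hv).trans_eq ?_
  rw [matRpow, mfun_congr hγ.isHermitian fun i => ?_]
  rw [Function.comp_apply, Real.rpow_def_of_pos (hγ.eigenvalues_pos i), mul_comm]

lemma quadForm_matRpow_interpolation (hγ : γ.PosDef) {a : ℝ} (ha : 1 ≤ a) (v : m → ℂ) :
    quadForm (matRpow (a⁻¹ - 1) γ) v ≤ quadForm γ⁻¹ v ^ (1 - a⁻¹) * quadForm 1 v ^ a⁻¹ := by
  set g := hγ.isHermitian.eigenvalues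
  set w := spectralWeight hγ.isHermitian v
  have hg : ∀ j, 0 < g j := hγ.eigenvalues_pos
  have hw : ∀ j, 0 ≤ w j := spectralWeight_nonneg hγ.isHermitian v
  have ha0 : a ≠ 0 := (zero_lt_one.trans_le ha).ne'
  have split (j : m) : g j ^ (a⁻¹ - 1) = g j ^ (-1 : ℝ) * g j ^ a⁻¹ := by
    rw [← Real.rpow_add (hg j), neg_add_eq_sub]
  have cancel (j : m) : g j ^ (-1 : ℝ) * (g j ^ a⁻¹) ^ a = 1 := by
    rw [Real.rpow_inv_rpow (hg j).le ha0, Real.rpow_neg_one, inv_mul_cancel₀ (hg j).ne']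
  have holder := Real.inner_le_weight_mul_Lp_of_nonneg Finset.univ ha
    (fun j => w j * g j ^ (-1 : ℝ)) (fun j => g j ^ a⁻¹)
    (fun j => mul_nonneg (hw j) (Real.rpow_nonneg (hg j).le _))
    (fun j => Real.rpow_nonneg (hg j).le _)
  simp only [mul_assoc, ← split, cancel, mul_one] at holder
  rwa [← matRpow_neg_one hγ, matRpow, matRpow, quadForm_mfun hγ.isHermitian,
    quadForm_mfun hγ.isHermitian, ← sum_spectralWeight hγ.isHermitian]

end SpectralWeight

section Trace

variable {m : Type*} [Fintype m] [DecidableEq m] {A γ : Matrix m m ℂ}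

lemma mfun_mulVec_eigenvectorBasis (hA : A.IsHermitian) (f : ℝ → ℝ) (i : m) :
    mfun f A *ᵥ (hA.eigenvectorBasis i).ofLp =
      f (hA.eigenvalues i) • (hA.eigenvectorBasis i).ofLp := by
  rw [mfun, dif_pos hA, IsHermitian.cfc, Unitary.conjStarAlgAut_apply, ← mulVec_mulVec,
    ← mulVec_mulVec, hA.star_eigenvectorUnitary_mulVec, diagonal_mulVec_single,
    ← hA.eigenvectorUnitary_mulVec, mul_one, ← mulVec_smul, ← Pi.single_smul]
  simp

lemma quadForm_mfun_eigenvectorBasis (hA : A.IsHermitian) (f : ℝ → ℝ) (i : m) :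
    quadForm (mfun f A) (hA.eigenvectorBasis i).ofLp = f (hA.eigenvalues i) := by
  rw [← one_mul (mfun f A), quadForm_mul_of_mulVec_eq_smul 1 (mfun_mulVec_eigenvectorBasis hA f i),
    quadForm_one_orthonormalBasis, mul_one]

lemma quadForm_eigenvectorBasis (hA : A.IsHermitian) (i : m) :
    quadForm A (hA.eigenvectorBasis i).ofLp = hA.eigenvalues i := by
  simpa [mfun_id hA] using quadForm_mfun_eigenvectorBasis hA id i

lemma re_trace_mul (hA : A.IsHermitian) (M : Matrix m m ℂ) :
    (trace (A * M)).re =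
      ∑ i, hA.eigenvalues i * quadForm M (hA.eigenvectorBasis i).ofLp := by
  rw [trace_mul_comm, re_trace_eq_sum_quadForm hA.eigenvectorBasis]
  exact Finset.sum_congr rfl fun i _ =>
    quadForm_mul_of_mulVec_eq_smul M (hA.mulVec_eigenvectorBasis i)

lemma re_trace_mfun (hA : A.IsHermitian) (f : ℝ → ℝ) :
    (trace (mfun f A)).re = ∑ i, f (hA.eigenvalues i) := by
  rw [re_trace_eq_sum_quadForm hA.eigenvectorBasis]
  exact Finset.sum_congr rfl fun i _ => quadForm_mfun_eigenvectorBasis hA f i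

lemma re_trace_mfun_conjTranspose_mul_self (f : ℝ → ℝ) (T : Matrix m m ℂ) :
    (trace (mfun f (Tᴴ * T))).re = (trace (mfun f (T * Tᴴ))).re := by
  have h₁ := isHermitian_conjTranspose_mul_self T
  have h₂ := isHermitian_mul_conjTranspose_self T
  rw [re_trace_mfun h₁, re_trace_mfun h₂,
    (IsHermitian.eigenvalues_eq_eigenvalues_iff h₁ h₂).mpr (charpoly_mul_comm _ _)]

lemma sum_map_quadForm_le_re_trace_mfun {s : Set ℝ} {f : ℝ → ℝ} (hf : ConvexOn ℝ s f)
    (hA : A.IsHermitian) (hs : ∀ j, hA.eigenvalues j ∈ s) {ι : Type*} [Fintype ι]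
    (b : OrthonormalBasis ι ℂ (EuclideanSpace ℂ m)) :
    ∑ i, f (quadForm A (b i).ofLp) ≤ (trace (mfun f A)).re := by
  rw [re_trace_eq_sum_quadForm b]
  refine Finset.sum_le_sum fun i _ => ?_
  simpa only [mfun_id hA, Function.comp_id] using
    map_quadForm_mfun_le (g := id) hf hA hs (quadForm_one_orthonormalBasis b i)

lemma posSemidef_sub_mul_conjTranspose_iff {n : Type*} [Fintype n] [DecidableEq n]
    (hγ : γ.PosDef) (T : Matrix m n ℂ) :
    (γ - T * Tᴴ).PosSemidef ↔ (1 - Tᴴ * γ⁻¹ * T).PosSemidef := by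
  -- Both sides are Schur complements in the block matrix `[[γ, T], [Tᴴ, 1]]`.
  have := hγ.isUnit.invertible
  have : Invertible (1 : Matrix n n ℂ) := invertibleOne
  rw [← PosDef.fromBlocks₁₁ T 1 hγ, PosDef.fromBlocks₂₂ γ T PosDef.one, inv_one, Matrix.mul_one]

lemma re_trace_matRpow_le {n : Type*} [Fintype n] [DecidableEq n] {a : ℝ} (ha : 1 ≤ a)
    (hγ : γ.PosDef) {T : Matrix m n ℂ} (hT : (γ - T * Tᴴ).PosSemidef) :
    (trace (matRpow a (Tᴴ * matRpow (a⁻¹ - 1) γ * T))).re ≤ (trace (Tᴴ * T)).re := by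
  have hB : (Tᴴ * matRpow (a⁻¹ - 1) γ * T).PosSemidef :=
    (posSemidef_matRpow hγ _).conjTranspose_mul_mul_same T
  have ha0 : 0 < a := zero_lt_one.trans_le ha
  set w := hB.isHermitian.eigenvectorBasis
  rw [matRpow, re_trace_mfun hB.isHermitian, re_trace_eq_sum_quadForm w]
  refine Finset.sum_le_sum fun k _ => ?_
  set v := T *ᵥ (w k).ofLp
  have hv0 : 0 ≤ quadForm γ⁻¹ v := quadForm_nonneg hγ.inv.posSemidef v
  have hv1 : quadForm γ⁻¹ v ≤ 1 := by
    have h := quadForm_nonneg ((posSemidef_sub_mul_conjTranspose_iff hγ T).mp hT) (w k).ofLp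
    rwa [quadForm_sub, quadForm_one_orthonormalBasis, quadForm_conjTranspose_mul_mul_same,
      sub_nonneg] at h
  have hvv : 0 ≤ quadForm 1 v := quadForm_nonneg PosSemidef.one v
  calc hB.isHermitian.eigenvalues k ^ a
      = quadForm (matRpow (a⁻¹ - 1) γ) v ^ a := by
        rw [← quadForm_conjTranspose_mul_mul_same, quadForm_eigenvectorBasis]
    _ ≤ (quadForm γ⁻¹ v ^ (1 - a⁻¹) * quadForm 1 v ^ a⁻¹) ^ a := by
        gcongr
        · exact quadForm_nonneg (posSemidef_matRpow hγ _) v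
        · exact quadForm_matRpow_interpolation hγ ha v
    _ ≤ (1 * quadForm 1 v ^ a⁻¹) ^ a := by
        gcongr
        exact Real.rpow_le_one hv0 hv1 (sub_nonneg.mpr (inv_le_one_of_one_le₀ ha))
    _ = quadForm 1 v := by rw [one_mul, Real.rpow_inv_rpow hvv ha0.ne']
    _ = quadForm (Tᴴ * T) (w k).ofLp := by
        rw [← quadForm_conjTranspose_mul_mul_same, Matrix.mul_one]

end Trace

section SandwichedRenyi

variable {m : Type*} [Fintype m] [DecidableEq m] {ρ γ : Matrix m m ℂ} {a : ℝ}

/-- The sandwiched Rényi quasi-entropy `Q̃_a(ρ, γ) = Tr (γ^((1-a)/(2a)) ρ γ^((1-a)/(2a)))^a`, of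
which `sandRenyiRel a ρ γ` is the normalized logarithm. -/
noncomputable def sandRenyiTrace (a : ℝ) (ρ γ : Matrix m m ℂ) : ℝ :=
  (trace (matRpow a (matRpow ((1 - a) / (2 * a)) γ * ρ * matRpow ((1 - a) / (2 * a)) γ))).re

lemma sandRenyiTrace_eq_re_trace_matSqrt (ha : a ≠ 0) (hρ : ρ.PosSemidef) (hγ : γ.PosDef) :
    sandRenyiTrace a ρ γ =
      (trace (matRpow a ((matSqrt ρ)ᴴ * matRpow (a⁻¹ - 1) γ * matSqrt ρ))).re := by
  set G := matRpow ((1 - a) / (2 * a)) γ with hG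
  set R := matSqrt ρ
  have hR : Rᴴ = R := conjTranspose_matSqrt ρ
  have hG' : Gᴴ = G := conjTranspose_matRpow _ γ
  have hGG : matRpow (a⁻¹ - 1) γ = G * G := by
    rw [hG, matRpow_mul_matRpow hγ]
    congr 1
    field_simp
    ring
  have hGρG : G * ρ * G = (R * G)ᴴ * (R * G) := by
    rw [← matSqrt_mul_self hρ, conjTranspose_mul, hR, hG']
    simp only [R, Matrix.mul_assoc]
  have hRGGR : Rᴴ * (G * G) * R = (R * G) * (R * G)ᴴ := by
    rw [conjTranspose_mul, hR, hG']
    simp only [Matrix.mul_assoc]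
  rw [sandRenyiTrace, hGG, hRGGR, ← hG, hGρG]
  exact re_trace_mfun_conjTranspose_mul_self _ _

lemma sandRenyiTrace_smul (hρ : ρ.PosSemidef) {c : ℝ} (hc : 0 ≤ c) :
    sandRenyiTrace a (c • ρ) γ = c ^ a * sandRenyiTrace a ρ γ := by
  set G := matRpow ((1 - a) / (2 * a)) γ with hG
  have hGρG : (G * ρ * G).PosSemidef := by
    simpa only [G, conjTranspose_matRpow] using hρ.mul_mul_conjTranspose_same G
  rw [sandRenyiTrace, sandRenyiTrace, ← hG, Matrix.mul_smul, Matrix.smul_mul,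
    matRpow_smul hGρG hc, trace_smul, Complex.smul_re, smul_eq_mul]

lemma sandRenyiTrace_le_re_trace (ha : 1 ≤ a) (hρ : ρ.PosSemidef) (hγ : γ.PosDef)
    (hργ : (γ - ρ).PosSemidef) : sandRenyiTrace a ρ γ ≤ (trace ρ).re := by
  rw [sandRenyiTrace_eq_re_trace_matSqrt (zero_lt_one.trans_le ha).ne' hρ hγ]
  have hT : (γ - matSqrt ρ * (matSqrt ρ)ᴴ).PosSemidef := by
    rwa [conjTranspose_matSqrt, matSqrt_mul_self hρ]
  simpa only [conjTranspose_matSqrt, matSqrt_mul_self hρ] using re_trace_matRpow_le ha hγ hT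

lemma sandRenyiTrace_le_rpow (ha : 1 ≤ a) (hρ : IsDensity ρ) (hγ : γ.PosDef) {c : ℝ} (hc : 0 < c)
    (hργ : (γ - c • ρ).PosSemidef) : sandRenyiTrace a ρ γ ≤ c ^ (1 - a) := by
  have h := sandRenyiTrace_le_re_trace ha (hρ.1.smul hc.le) hγ hργ
  rw [sandRenyiTrace_smul hρ.1 hc.le, trace_smul, hρ.2, Complex.smul_re, Complex.one_re,
    smul_eq_mul, mul_one] at h
  rwa [Real.rpow_sub hc, Real.rpow_one, le_div_iff₀' (Real.rpow_pos_of_pos hc a)]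

lemma sum_eigenvalues_eq_one (hρ : IsDensity ρ) : ∑ i, hρ.1.isHermitian.eigenvalues i = 1 := by
  simpa [mfun_id hρ.1.isHermitian, hρ.2] using (re_trace_mfun hρ.1.isHermitian id).symm

lemma relEntropy_eq_sum (hρ : ρ.IsHermitian) (γ : Matrix m m ℂ) :
    relEntropy ρ γ = ∑ i, hρ.eigenvalues i *
      (Real.log (hρ.eigenvalues i) - quadForm (matLog γ) (hρ.eigenvectorBasis i).ofLp) := by
  rw [relEntropy, re_trace_mul hρ]
  simp only [quadForm_sub, matLog, quadForm_mfun_eigenvectorBasis hρ]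

lemma mul_exp_eq_rpow (ha : 0 < a) {p : ℝ} (hp : 0 ≤ p) (y : ℝ) :
    p * Real.exp ((a - 1) * (Real.log p - y)) = (p * Real.exp ((a⁻¹ - 1) * y)) ^ a := by
  obtain rfl | hp := hp.eq_or_lt
  · simp [Real.zero_rpow ha.ne']
  · nth_rw 1 [← Real.exp_log hp]
    rw [← Real.exp_add, Real.mul_rpow hp.le (Real.exp_pos _).le, Real.rpow_def_of_pos hp,
      ← Real.exp_mul, ← Real.exp_add]
    congr 1
    field_simp
    ring

lemma exp_relEntropy_le_sandRenyiTrace (ha : 1 ≤ a) (hρ : IsDensity ρ) (hγ : γ.PosDef) :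
    Real.exp ((a - 1) * relEntropy ρ γ) ≤ sandRenyiTrace a ρ γ := by
  have hρ0 := hρ.1
  have ha0 : 0 < a := zero_lt_one.trans_le ha
  set p := hρ0.isHermitian.eigenvalues
  set u := fun i => (hρ0.isHermitian.eigenvectorBasis i).ofLp
  have hp : ∀ i, 0 ≤ p i := hρ0.eigenvalues_nonneg
  set B := (matSqrt ρ)ᴴ * matRpow (a⁻¹ - 1) γ * matSqrt ρ
  have hB : B.PosSemidef := (posSemidef_matRpow hγ _).conjTranspose_mul_mul_same _
  have hBu (i : m) : quadForm B (u i) = p i * quadForm (matRpow (a⁻¹ - 1) γ) (u i) := by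
    rw [quadForm_conjTranspose_mul_mul_same, matSqrt, mfun_mulVec_eigenvectorBasis,
      quadForm_smul_vec, Real.sq_sqrt (hp i)]
  calc Real.exp ((a - 1) * relEntropy ρ γ)
      = Real.exp (∑ i, p i • ((a - 1) * (Real.log (p i) - quadForm (matLog γ) (u i)))) := by
        simp only [relEntropy_eq_sum hρ0.isHermitian, Finset.mul_sum, smul_eq_mul, mul_left_comm,
          p, u]
    _ ≤ ∑ i, p i • Real.exp ((a - 1) * (Real.log (p i) - quadForm (matLog γ) (u i))) :=
        convexOn_exp.map_sum_le (fun i _ => hp i) (sum_eigenvalues_eq_one hρ)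
          fun _ _ => Set.mem_univ _
    _ = ∑ i, (p i * Real.exp ((a⁻¹ - 1) * quadForm (matLog γ) (u i))) ^ a := by
        simp only [smul_eq_mul, mul_exp_eq_rpow ha0 (hp _)]
    _ ≤ ∑ i, quadForm B (u i) ^ a := by
        gcongr with i
        · exact mul_nonneg (hp i) (Real.exp_pos _).le
        rw [hBu]
        exact mul_le_mul_of_nonneg_left
          (exp_quadForm_matLog_le hγ _ (quadForm_one_orthonormalBasis _ i)) (hp i)
    _ ≤ (trace (matRpow a B)).re :=
        sum_map_quadForm_le_re_trace_mfun (convexOn_rpow ha) hB.isHermitian hB.eigenvalues_nonneg _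
    _ = sandRenyiTrace a ρ γ := (sandRenyiTrace_eq_re_trace_matSqrt ha0.ne' hρ0 hγ).symm

lemma sandRenyiRel_le_neg_log (ha : 1 < a) (hρ : IsDensity ρ) (hγ : γ.PosDef) {c : ℝ} (hc : 0 < c)
    (hργ : (γ - c • ρ).PosSemidef) : sandRenyiRel a ρ γ ≤ -Real.log c := by
  have hpos : 0 < sandRenyiTrace a ρ γ :=
    (Real.exp_pos _).trans_le (exp_relEntropy_le_sandRenyiTrace ha.le hρ hγ)
  calc sandRenyiRel a ρ γ = (a - 1)⁻¹ * Real.log (sandRenyiTrace a ρ γ) := rfl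
    _ ≤ (a - 1)⁻¹ * Real.log (c ^ (1 - a)) := by
        gcongr
        exact sandRenyiTrace_le_rpow ha.le hρ hγ hc hργ
    _ = -Real.log c := by
        rw [Real.log_rpow hc, ← neg_sub a 1, neg_mul, mul_neg,
          inv_mul_cancel_left₀ (sub_ne_zero.mpr ha.ne')]

lemma relEntropy_le_sandRenyiRel (ha : 1 < a) (hρ : IsDensity ρ) (hγ : γ.PosDef) :
    relEntropy ρ γ ≤ sandRenyiRel a ρ γ := by
  have h := exp_relEntropy_le_sandRenyiTrace ha.le hρ hγ
  have hlog := (Real.le_log_iff_exp_le ((Real.exp_pos _).trans_le h)).mpr h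
  exact (le_inv_mul_iff₀ (sub_pos.mpr ha)).mpr hlog

end SandwichedRenyi

lemma binEntropy_eq_negMulLog_add (x : ℝ) :
    binEntropy x = Real.negMulLog x + Real.negMulLog (1 - x) := by
  rw [binEntropy, Real.negMulLog, Real.negMulLog]
  ring

section Ensemble

lemma posSemidef_sum_smul_sub_smul {ι m : Type*} [Fintype ι] {p : ι → ℝ} (hp : ∀ i, 0 ≤ p i)
    {ρ : ι → Matrix m m ℂ} (hρ : ∀ i, (ρ i).PosSemidef) (i : ι) :
    (∑ j, p j • ρ j - p i • ρ i).PosSemidef := by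
  classical
  rw [← Finset.sum_erase_eq_sub (Finset.mem_univ i)]
  exact posSemidef_sum _ fun j _ => (hρ j).smul (hp j)

variable {ι m : Type*} [Fintype ι] [Fintype m] [DecidableEq m]

lemma sum_mul_relEntropy_eq (p : ι → ℝ) (ρ : ι → Matrix m m ℂ) :
    ∑ i, p i * relEntropy (ρ i) (∑ j, p j • ρ j) =
      vnEntropy (∑ j, p j • ρ j) - ∑ i, p i * vnEntropy (ρ i) := by
  have hS (L : Matrix m m ℂ) : (trace ((∑ j, p j • ρ j) * L)).re =
      ∑ i, p i * (trace (ρ i * L)).re := by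
    simp only [Finset.sum_mul, trace_sum, Matrix.smul_mul, trace_smul, Complex.re_sum,
      Complex.smul_re, smul_eq_mul]
  simp only [vnEntropy, hS, relEntropy, trace_sub, Complex.sub_re, mul_sub, mul_neg,
    Finset.sum_sub_distrib, Finset.sum_neg_distrib]
  ring

theorem mosonyi_bounds_general {p : ι → ℝ} (hp : ∀ i, 0 ≤ p i) {a : ℝ} (ha : 1 < a)
    {ρ : ι → Matrix m m ℂ} (hρ : ∀ i, IsDensity (ρ i)) (hAv : (∑ j, p j • ρ j).PosDef) :
    ∑ i, p i * sandRenyiRel a (ρ i) (∑ j, p j • ρ j) ≤ ∑ i, Real.negMulLog (p i) ∧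
      vnEntropy (∑ j, p j • ρ j) - ∑ i, p i * vnEntropy (ρ i) ≤
        ∑ i, p i * sandRenyiRel a (ρ i) (∑ j, p j • ρ j) := by
  constructor
  · refine Finset.sum_le_sum fun i _ => ?_
    obtain hi | hi := (hp i).eq_or_lt
    · simp [← hi]
    · rw [Real.negMulLog, neg_mul, ← mul_neg]
      exact mul_le_mul_of_nonneg_left (sandRenyiRel_le_neg_log ha (hρ i) hAv hi
        (posSemidef_sum_smul_sub_smul hp (fun j => (hρ j).1) i)) hi.le
  · rw [← sum_mul_relEntropy_eq]
    exact Finset.sum_le_sum fun i _ =>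
      mul_le_mul_of_nonneg_left (relEntropy_le_sandRenyiRel ha (hρ i) hAv) (hp i)

end Ensemble

theorem mosonyi_bounds (n : ℕ) (hn : 1 ≤ n) (x : ℝ) (hx : x ∈ Set.Ioo (0:ℝ) 1)
    (a : ℝ) (ha : 1 < a)
    (ρ₁ ρ₂ : Matrix (Fin n) (Fin n) ℂ) (h1 : IsDensity ρ₁) (h2 : IsDensity ρ₂)
    (hAv : (x • ρ₁ + (1 - x) • ρ₂).PosDef) :
    binEntropy x
      ≥ x * sandRenyiRel a ρ₁ (x • ρ₁ + (1 - x) • ρ₂)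
          + (1 - x) * sandRenyiRel a ρ₂ (x • ρ₁ + (1 - x) • ρ₂)
    ∧ x * sandRenyiRel a ρ₁ (x • ρ₁ + (1 - x) • ρ₂)
          + (1 - x) * sandRenyiRel a ρ₂ (x • ρ₁ + (1 - x) • ρ₂)
      ≥ vnEntropy (x • ρ₁ + (1 - x) • ρ₂) - x * vnEntropy ρ₁ - (1 - x) * vnEntropy ρ₂ := by
  simpa [binEntropy_eq_negMulLog_add, sub_sub] using
    mosonyi_bounds_general (p := ![x, 1 - x]) (ρ := ![ρ₁, ρ₂])
      (by simp [Fin.forall_fin_two, hx.1.le, hx.2.le]) ha (by simp [Fin.forall_fin_two, h1, h2])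
      (by simpa using hAv)
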